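/- Let F be an algebraically closed field with characteristic ≠ 2 and ≠ 3, and let b, c ∈ F with bc ≠ 1. Then the derivation algebra of the algebra E1(b,c) with MSC [[1,0,0,b],[c,0,0,1]] is zero: Der(E1(b,c)) = {0}. -/

import Mathlib

open Matrix Kronecker

variable {F : Type*}

/-- The Kronecker (tensor) product of two `2 × 2` matrices, realized as a `4 × 4` matrix;
rows/columns are indexed in row-major order by the pairs `(1,1), (1,2), (2,1), (2,2)`. -/
def kron [CommRing F] (g h : Matrix (Fin 2) (Fin 2) F) : Matrix (Fin 4) (Fin 4) F :=
  Matrix.reindex finProdFinEquiv finProdFinEquiv (g ⊗ₖ h)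

/-- Two `2`-dimensional algebras given by matrices of structure constants `A, B`
are isomorphic iff `B = g · A · (g⁻¹ ⊗ g⁻¹)` for some `g ∈ GL(2, F)`. -/
def Isomorphic [Field F] (A B : Matrix (Fin 2) (Fin 4) F) : Prop :=
  ∃ g : GL (Fin 2) F,
    B = (g : Matrix (Fin 2) (Fin 2) F) * A *
        kron ((↑(g⁻¹) : Matrix (Fin 2) (Fin 2) F)) ((↑(g⁻¹) : Matrix (Fin 2) (Fin 2) F))

/-- The automorphism group of the algebra with MSC `E`, as a set of (invertible) `2 × 2`
matrices: `Aut(E) = {g ∈ GL(2,F) : g·E = E·(g ⊗ g)}`. -/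
def Aut [Field F] (E : Matrix (Fin 2) (Fin 4) F) : Set (Matrix (Fin 2) (Fin 2) F) :=
  {g | IsUnit g ∧ g * E = E * kron g g}

/-- The derivation algebra of the algebra with MSC `E`:
`Der(E) = { D : E·(D ⊗ I + I ⊗ D) = D·E }`. -/
def Der [Field F] (E : Matrix (Fin 2) (Fin 4) F) : Set (Matrix (Fin 2) (Fin 2) F) :=
  {D | E * (kron D 1 + kron 1 D) = D * E}

/-!
Writing `e₁, e₂` for the standard basis, the algebra `E₁(b, c)` has `e₁e₂ = e₂e₁ = 0`,
`e₁² = e₁ + c e₂` and `e₂² = b e₁ + e₂`: it is an evolution algebra with natural basis `e₁, e₂`,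
and its squares are linearly independent because `bc ≠ 1`. Let `D` be a derivation. For `i ≠ j`,
applying `D` to `eᵢeⱼ = 0` gives a linear relation between `eᵢ²` and `eⱼ²` whose coefficients are
off-diagonal entries of `D`, so `D` is diagonal. Then `D eᵢ² = 2dᵢ eᵢ²`, while the `eᵢ`-coordinate
of `D eᵢ²` is `dᵢ` times that of `eᵢ²`. This coordinate is nonzero, so `dᵢ = 2dᵢ` and `dᵢ = 0`.
-/

section EvolutionAlgebra

variable {ι R M : Type*} [CommRing R] [AddCommGroup M] [Module R M]

/-- The linear endomorphism `D` is a derivation of the (nonassociative) algebra on `M` whose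
product is the bilinear map `μ`. -/
def IsLeibniz (μ : M →ₗ[R] M →ₗ[R] M) (D : M →ₗ[R] M) : Prop :=
  ∀ u v, D (μ u v) = μ (D u) v + μ u (D v)

/-- The basis `e` is a natural basis for the product `μ`, i.e. it exhibits `(M, μ)` as an
evolution algebra: distinct basis vectors multiply to zero. -/
def IsNaturalBasis (μ : M →ₗ[R] M →ₗ[R] M) (e : Module.Basis ι R M) : Prop :=
  Pairwise fun i j => μ (e i) (e j) = 0

variable {μ : M →ₗ[R] M →ₗ[R] M} {D : M →ₗ[R] M} {e : Module.Basis ι R M}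

lemma isLeibniz_zero : IsLeibniz μ 0 := by
  simp [IsLeibniz]

namespace IsNaturalBasis

lemma basis_mul (he : IsNaturalBasis μ e) (i : ι) (v : M) :
    μ (e i) v = e.repr v i • μ (e i) (e i) := by
  classical
  suffices h : μ (e i) = (e.coord i).smulRight (μ (e i) (e i)) from LinearMap.congr_fun h v
  refine e.ext fun j => ?_
  obtain rfl | hij := eq_or_ne i j
  · simp
  · simp [he hij, hij.symm]

lemma flip (he : IsNaturalBasis μ e) : IsNaturalBasis μ.flip e :=
  fun _ _ hij => he hij.symm

lemma mul_basis (he : IsNaturalBasis μ e) (i : ι) (v : M) :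
    μ v (e i) = e.repr v i • μ (e i) (e i) :=
  he.flip.basis_mul i v

end IsNaturalBasis

namespace IsLeibniz

lemma repr_apply_basis_eq_zero_of_ne (hD : IsLeibniz μ D) (he : IsNaturalBasis μ e)
    (hsq : LinearIndependent R fun i => μ (e i) (e i)) {i j : ι} (hij : i ≠ j) :
    e.repr (D (e i)) j = 0 := by
  have relation : e.repr (D (e i)) j • μ (e j) (e j) + e.repr (D (e j)) i • μ (e i) (e i) = 0 := by
    rw [← he.mul_basis, ← he.basis_mul, ← hD, he hij, map_zero]
  exact ((LinearIndepOn.pair_iff _ hij.symm).mp (hsq.linearIndepOn {j, i}) _ _ relation).1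

lemma apply_basis (hD : IsLeibniz μ D) (he : IsNaturalBasis μ e)
    (hsq : LinearIndependent R fun i => μ (e i) (e i)) (i : ι) :
    D (e i) = e.repr (D (e i)) i • e i := by
  classical
  refine e.ext_elem fun j => ?_
  obtain rfl | hij := eq_or_ne i j
  · simp
  · simp [hD.repr_apply_basis_eq_zero_of_ne he hsq hij, hij]

lemma repr_apply (hD : IsLeibniz μ D) (he : IsNaturalBasis μ e)
    (hsq : LinearIndependent R fun i => μ (e i) (e i)) (v : M) (i : ι) :
    e.repr (D v) i = e.repr (D (e i)) i * e.repr v i := by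
  classical
  suffices h : e.coord i ∘ₗ D = e.repr (D (e i)) i • e.coord i from LinearMap.congr_fun h v
  refine e.ext fun j => ?_
  obtain rfl | hij := eq_or_ne i j
  · simp
  · simp [hD.repr_apply_basis_eq_zero_of_ne he hsq hij.symm, hij.symm]

lemma apply_basis_mul_self (hD : IsLeibniz μ D) (he : IsNaturalBasis μ e) (i : ι) :
    D (μ (e i) (e i)) = (2 * e.repr (D (e i)) i) • μ (e i) (e i) := by
  rw [hD, he.mul_basis, he.basis_mul i (D (e i)), two_mul, add_smul]

theorem eq_zero [NoZeroDivisors R] (hD : IsLeibniz μ D) (he : IsNaturalBasis μ e)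
    (hsq : LinearIndependent R fun i => μ (e i) (e i))
    (hdiag : ∀ i, e.repr (μ (e i) (e i)) i ≠ 0) : D = 0 := by
  refine e.ext fun i => ?_
  have eigenvalue : e.repr (D (e i)) i * e.repr (μ (e i) (e i)) i =
      2 * e.repr (D (e i)) i * e.repr (μ (e i) (e i)) i := by
    rw [← hD.repr_apply he hsq, hD.apply_basis_mul_self he, map_smul, Finsupp.smul_apply,
      smul_eq_mul]
  have diag_eq_zero : e.repr (D (e i)) i = 0 :=
    (mul_eq_zero.mp (by linear_combination -eigenvalue)).resolve_right (hdiag i)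
  rw [hD.apply_basis he hsq, diag_eq_zero, zero_smul, LinearMap.zero_apply]

end IsLeibniz

end EvolutionAlgebra

section StructureConstants

/-- The row-major indexing of pairs by `Fin 4` that `kron` uses. -/
def pairEquiv : Fin 2 × Fin 2 ≃ Fin 4 :=
  finProdFinEquiv

variable {R m : Type*} [CommRing R]

lemma kron_pairEquiv (g h : Matrix (Fin 2) (Fin 2) R) (p q : Fin 2 × Fin 2) :
    kron g h (pairEquiv p) (pairEquiv q) = g p.1 q.1 * h p.2 q.2 := by
  simp only [kron, pairEquiv, Matrix.reindex_apply, Matrix.submatrix_apply,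
    Equiv.symm_apply_apply, Matrix.kroneckerMap_apply]

/-- The Kronecker product `u ⊗ v` of two column vectors, indexed by `pairEquiv`, as a bilinear
map. -/
def kronVec : (Fin 2 → R) →ₗ[R] (Fin 2 → R) →ₗ[R] (Fin 4 → R) :=
  LinearMap.mk₂ R (fun u v k => u (pairEquiv.symm k).1 * v (pairEquiv.symm k).2)
    (fun _ _ _ => funext fun _ => add_mul _ _ _)
    (fun _ _ _ => funext fun _ => mul_assoc _ _ _)
    (fun _ _ _ => funext fun _ => mul_add _ _ _)
    (fun a u v => funext fun _ => mul_left_comm (u _) a (v _))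

lemma kronVec_pairEquiv (u v : Fin 2 → R) (p : Fin 2 × Fin 2) :
    kronVec u v (pairEquiv p) = u p.1 * v p.2 := by
  rw [kronVec, LinearMap.mk₂_apply, Equiv.symm_apply_apply]

lemma kronVec_single_single (i j : Fin 2) :
    kronVec (Pi.single i 1) (Pi.single j 1) = (Pi.single (pairEquiv (i, j)) 1 : Fin 4 → R) := by
  ext k
  obtain ⟨⟨i', j'⟩, rfl⟩ := pairEquiv.surjective k
  simp only [kronVec_pairEquiv, Pi.single_apply, EmbeddingLike.apply_eq_iff_eq,
    Prod.mk.injEq, ite_zero_mul_ite_zero, mul_one]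

lemma kron_mulVec_kronVec (g h : Matrix (Fin 2) (Fin 2) R) (u v : Fin 2 → R) :
    kron g h *ᵥ kronVec u v = kronVec (g *ᵥ u) (h *ᵥ v) := by
  ext k
  obtain ⟨⟨i, j⟩, rfl⟩ := pairEquiv.surjective k
  rw [kronVec_pairEquiv, Matrix.mulVec, dotProduct, ← pairEquiv.sum_comp,
    Fintype.sum_prod_type, Matrix.mulVec, Matrix.mulVec, dotProduct, dotProduct,
    Finset.sum_mul_sum]
  refine Finset.sum_congr rfl fun i' _ => Finset.sum_congr rfl fun j' _ => ?_
  rw [kronVec_pairEquiv, kron_pairEquiv, mul_mul_mul_comm]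

lemma ext_mulVec_kronVec {A B : Matrix m (Fin 4) R}
    (h : ∀ u v, A *ᵥ kronVec u v = B *ᵥ kronVec u v) : A = B := by
  refine Matrix.ext_of_mulVec_single fun k => ?_
  obtain ⟨⟨i, j⟩, rfl⟩ := pairEquiv.surjective k
  rw [← kronVec_single_single, h]

/-- The product `u · v = E (u ⊗ v)` of the algebra whose matrix of structure constants is `E`. -/
def mscMul (E : Matrix (Fin 2) (Fin 4) R) : (Fin 2 → R) →ₗ[R] (Fin 2 → R) →ₗ[R] (Fin 2 → R) :=
  kronVec.compr₂ E.mulVecLin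

lemma mscMul_apply (E : Matrix (Fin 2) (Fin 4) R) (u v : Fin 2 → R) :
    mscMul E u v = E *ᵥ kronVec u v :=
  rfl

lemma mscMul_basisFun (E : Matrix (Fin 2) (Fin 4) R) (i j : Fin 2) :
    mscMul E (Pi.basisFun R (Fin 2) i) (Pi.basisFun R (Fin 2) j) =
      E.col (pairEquiv (i, j)) := by
  rw [Pi.basisFun_apply, Pi.basisFun_apply, mscMul_apply, kronVec_single_single,
    Matrix.mulVec_single_one]

end StructureConstants

lemma mem_Der_iff_isLeibniz [Field F] {E : Matrix (Fin 2) (Fin 4) F}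
    {D : Matrix (Fin 2) (Fin 2) F} : D ∈ Der E ↔ IsLeibniz (mscMul E) D.mulVecLin := by
  have leibniz_rhs (u v : Fin 2 → F) : mscMul E (D *ᵥ u) v + mscMul E u (D *ᵥ v) =
      (E * (kron D 1 + kron 1 D)) *ᵥ kronVec u v := by
    simp only [mscMul_apply, ← Matrix.mulVec_mulVec, Matrix.add_mulVec, kron_mulVec_kronVec,
      Matrix.one_mulVec, Matrix.mulVec_add]
  simp only [IsLeibniz, Matrix.mulVecLin_apply, leibniz_rhs]
  simp only [mscMul_apply, Matrix.mulVec_mulVec]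
  exact ⟨fun hD u v => congrArg (· *ᵥ kronVec u v) (Eq.symm hD),
    fun hD => ext_mulVec_kronVec fun u v => (hD u v).symm⟩

theorem Der_eq_singleton_zero_of_isNaturalBasis [Field F] {E : Matrix (Fin 2) (Fin 4) F}
    (he : IsNaturalBasis (mscMul E) (Pi.basisFun F (Fin 2)))
    (hsq : LinearIndependent F fun i => E.col (pairEquiv (i, i)))
    (hdiag : ∀ i, E i (pairEquiv (i, i)) ≠ 0) : Der E = {0} := by
  refine Set.eq_singleton_iff_unique_mem.mpr ⟨?_, fun D hD => ?_⟩
  · rw [mem_Der_iff_isLeibniz, Matrix.mulVecLin_zero]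
    exact isLeibniz_zero
  · have hD_lin : D.mulVecLin = 0 := (mem_Der_iff_isLeibniz.mp hD).eq_zero he
      (by simpa only [mscMul_basisFun] using hsq)
      (by simpa only [mscMul_basisFun, Pi.basisFun_repr, Matrix.col_apply] using hdiag)
    exact Matrix.toLin'.map_eq_zero_iff.mp hD_lin

theorem der_E1_general [Field F] {b c : F} (hbc : b * c ≠ 1) :
    Der (!![1, 0, 0, b; c, 0, 0, 1] : Matrix (Fin 2) (Fin 4) F) = {0} := by
  apply Der_eq_singleton_zero_of_isNaturalBasis
  · intro i j hij
    rw [mscMul_basisFun]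
    ext k
    fin_cases i <;> fin_cases j <;> fin_cases k <;> first | exact absurd rfl hij | rfl
  · have det_ne_zero : (!![1, c; b, 1] : Matrix (Fin 2) (Fin 2) F).det ≠ 0 := by
      rw [Matrix.det_fin_two_of, one_mul, mul_comm c b]
      exact sub_ne_zero.mpr hbc.symm
    have squares_eq_rows : (fun i => Matrix.col !![1, 0, 0, b; c, 0, 0, 1] (pairEquiv (i, i))) =
        (!![1, c; b, 1] : Matrix (Fin 2) (Fin 2) F).row := by
      ext i k
      fin_cases i <;> fin_cases k <;> rfl
    rw [squares_eq_rows]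
    exact Matrix.linearIndependent_rows_of_det_ne_zero det_ne_zero
  · intro i
    fin_cases i <;> exact one_ne_zero

theorem der_E1 (F : Type*) [Field F] [IsAlgClosed F]
    (h2 : ringChar F ≠ 2) (h3 : ringChar F ≠ 3) (b c : F) (hbc : b * c ≠ 1) :
    Der (!![1, 0, 0, b; c, 0, 0, 1] : Matrix (Fin 2) (Fin 4) F) = {0} := by
  exact der_E1_general hbc
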